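/- Let R be a commutative ring, ℓ ≥ 0, and let M be an R-module admitting a projective resolution of length ℓ by finitely generated projective R-modules, such that Ext^i_R(M, R) = 0 for all i ≠ ℓ. Set ω = Ext^ℓ_R(M, R). Then for every R-module N and every n with 0 ≤ n ≤ ℓ there is an isomorphism Tor^R_n(ω, N) ≅ Ext^{ℓ−n}_R(M, N), and Tor^R_n(ω, N) = 0 for n > ℓ. -/

import Mathlib

open CategoryTheory Limits Opposite

/-!
The cochain complex `K = Hom(P, R)` consists of flat modules and its only cohomology is `ω`, in
degree `ℓ`, where it ends. So `N ↦ K ⊗ N` is an exact functor to complexes, and the long exact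
cohomology sequence makes `N ↦ H^{ℓ-n}(K ⊗ N)` a homological δ-functor which vanishes on projective
modules for `n > 0` and equals `ω ⊗ -` for `n = 0`. Dimension shifting along the syzygies of a
projective resolution of `N` identifies such a δ-functor with the left derived functors
`Tor_n(ω, -)`. Finally `K ⊗ N ≅ Hom(P, N)`, because each `P_i` is finitely generated projective, so
that `H^{ℓ-n}(K ⊗ N) ≅ Ext^{ℓ-n}(M, N)`.
-/

open scoped ZeroObject

namespace Ischebeck

universe v u v' u'

section Syzygies

variable {C : Type u} [Category.{v} C] [Abelian C] {ι : Type*} {c : ComplexShape ι}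

/-- The sequence `K.opcycles i ⟶ K.X j ⟶ K.opcycles j`. For a resolution `K` the object
`K.opcycles j`, the cokernel of the differential into `K.X j`, is the `j`-th syzygy, and this is
the sequence relating two successive syzygies. -/
noncomputable def syzygySequence (K : HomologicalComplex C c) (i j : ι) : ShortComplex C :=
  .mk (K.fromOpcycles i j) (K.pOpcycles j) (by
    rw [← cancel_epi (K.pOpcycles i), K.p_fromOpcycles_assoc, K.d_pOpcycles, comp_zero])

lemma syzygySequence_shortExact (K : HomologicalComplex C c) {i j : ι} (hij : c.Rel i j)
    (hK : K.ExactAt i) : (syzygySequence K i j).ShortExact where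
  mono_f := Preadditive.mono_of_isZero_kernel' _ (K.homologyIsKernel i j (c.next_eq' hij))
    hK.isZero_homology
  epi_g := inferInstanceAs (Epi (K.pOpcycles j))
  exact := ShortComplex.exact_of_g_is_cokernel _ (isCokernelOfComp (K.pOpcycles i) (K.d i j)
    (K.opcyclesIsCokernel i j (c.prev_eq' hij)) (syzygySequence K i j).zero (K.p_fromOpcycles i j))

variable {D : Type u'} [Category.{v'} D] [Abelian D]
  (T : C ⥤ D) [T.Additive] [PreservesFiniteColimits T]

/-- A right exact functor commutes with the cokernels `K.opcycles i` of the differentials. -/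
noncomputable def mapOpcyclesIso (K : HomologicalComplex C c) (i : ι) :
    ((T.mapHomologicalComplex c).obj K).opcycles i ≅ T.obj (K.opcycles i) :=
  (((T.mapHomologicalComplex c).obj K).opcyclesIsCokernel _ i rfl).coconePointUniqueUpToIso
    (CokernelCofork.mapIsColimit _ (K.opcyclesIsCokernel _ i rfl) T)

lemma pOpcycles_mapOpcyclesIso_hom (K : HomologicalComplex C c) (i : ι) :
    ((T.mapHomologicalComplex c).obj K).pOpcycles i ≫ (mapOpcyclesIso T K i).hom =
      T.map (K.pOpcycles i) :=
  IsColimit.comp_coconePointUniqueUpToIso_hom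
    (((T.mapHomologicalComplex c).obj K).opcyclesIsCokernel _ i rfl)
    (CokernelCofork.mapIsColimit _ (K.opcyclesIsCokernel _ i rfl) T) WalkingParallelPair.one

lemma mapOpcyclesIso_hom_map_fromOpcycles (K : HomologicalComplex C c) (i j : ι) :
    (mapOpcyclesIso T K i).hom ≫ T.map (K.fromOpcycles i j) =
      ((T.mapHomologicalComplex c).obj K).fromOpcycles i j := by
  refine (cancel_epi (((T.mapHomologicalComplex c).obj K).pOpcycles i)).1 ?_
  have hp : ((T.mapHomologicalComplex c).obj K).pOpcycles i ≫ (mapOpcyclesIso T K i).hom ≫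
      T.map (K.fromOpcycles i j) = T.map (K.pOpcycles i) ≫ T.map (K.fromOpcycles i j) :=
    (Category.assoc _ _ _).symm.trans (eq_whisker (pOpcycles_mapOpcyclesIso_hom T K i) _)
  have hmap : T.map (K.pOpcycles i) ≫ T.map (K.fromOpcycles i j) = T.map (K.d i j) := by
    rw [← T.map_comp, K.p_fromOpcycles]
  exact (hp.trans hmap).trans
    (((T.mapHomologicalComplex c).obj K).p_fromOpcycles i j).symm

lemma mapOpcyclesIso_hom_naturality {T T' : C ⥤ D} [T.Additive] [PreservesFiniteColimits T]
    [T'.Additive] [PreservesFiniteColimits T'] (α : T ⟶ T') (K : HomologicalComplex C c) (i : ι) :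
    HomologicalComplex.opcyclesMap ((NatTrans.mapHomologicalComplex α c).app K) i ≫
        (mapOpcyclesIso T' K i).hom =
      (mapOpcyclesIso T K i).hom ≫ α.app (K.opcycles i) := by
  rw [← cancel_epi (((T.mapHomologicalComplex c).obj K).pOpcycles i),
    HomologicalComplex.p_opcyclesMap_assoc, pOpcycles_mapOpcyclesIso_hom,
    ← Category.assoc, pOpcycles_mapOpcyclesIso_hom]
  exact (α.naturality _).symm

/-- The homology of `T K` at `i`, for right exact `T`, as a kernel between the images of the terms
of the syzygy sequence of `K`. -/
noncomputable def homologyMapIsoKernel (K : HomologicalComplex C c) {i j : ι} (hij : c.Rel i j) :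
    ((T.mapHomologicalComplex c).obj K).homology i ≅ kernel (T.map (K.fromOpcycles i j)) :=
  (((T.mapHomologicalComplex c).obj K).homologyIsKernel i j
      (c.next_eq' hij)).conePointUniqueUpToIso (kernelIsKernel _) ≪≫
    kernel.mapIso _ _ (mapOpcyclesIso T K i) (Iso.refl _)
      ((Category.comp_id _).trans (mapOpcyclesIso_hom_map_fromOpcycles T K i j).symm)

end Syzygies

section Satellites

variable {C : Type u} [Category.{v} C] [Abelian C] {D : Type u'} [Category.{v'} D] [Abelian D]

/-- `G` is the left satellite of `F` in the sense of Cartan and Eilenberg, on objects: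
`G S.X₃ ≅ ker (F S.X₁ ⟶ F S.X₂)` for every short exact sequence with projective middle term. Only
the existence of an isomorphism is recorded, not its naturality. -/
def IsLeftSatellite (F G : C ⥤ D) : Prop :=
  ∀ S : ShortComplex C, S.ShortExact → Projective S.X₂ →
    Nonempty (G.obj S.X₃ ≅ kernel (F.map S.f))

lemma IsLeftSatellite.isZero_obj_of_projective {F G : C ⥤ D} (h : IsLeftSatellite F G)
    (hF : IsZero (F.obj 0)) (X : C) [Projective X] : IsZero (G.obj X) := by
  let S : ShortComplex C := .mk (0 : (0 : C) ⟶ X) (𝟙 X) zero_comp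
  have hS : S.ShortExact :=
    (ShortComplex.Splitting.ofIsZeroOfIsIso S (isZero_zero C) inferInstance).shortExact
  obtain ⟨e⟩ := h S hS ‹_›
  exact (hF.of_mono (kernel.ι (F.map S.f))).of_iso e

variable {H : ℕ → C ⥤ D} (hH : ∀ n, IsLeftSatellite (H n) (H (n + 1)))
include hH

lemma isZero_satellite_obj_zero (h0 : IsZero ((H 0).obj 0)) (n : ℕ) : IsZero ((H n).obj 0) := by
  induction n with
  | zero => exact h0
  | succ n ih => exact (hH n).isZero_obj_of_projective ih 0

lemma nonempty_satellite_succ_succ_iso (h0 : IsZero ((H 0).obj 0)) (n : ℕ) (S : ShortComplex C)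
    (hS : S.ShortExact) (hX₂ : Projective S.X₂) :
    Nonempty ((H (n + 2)).obj S.X₃ ≅ (H (n + 1)).obj S.X₁) := by
  obtain ⟨e⟩ := hH (n + 1) S hS hX₂
  have hzero : (H (n + 1)).map S.f = 0 :=
    ((hH n).isZero_obj_of_projective (isZero_satellite_obj_zero hH h0 n) S.X₂).eq_of_tgt _ _
  exact ⟨e ≪≫ kernelIsoOfEq hzero ≪≫ kernelZeroIsoSource⟩

lemma nonempty_satellite_opcycles_iso (h0 : IsZero ((H 0).obj 0)) (F : ChainComplex C ℕ)
    (hF : ∀ n, F.ExactAt (n + 1)) (hproj : ∀ n, Projective (F.X n)) (n : ℕ) :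
    ∀ k m : ℕ, k + n = m →
      Nonempty ((H (n + 1)).obj (F.opcycles k) ≅ (H 1).obj (F.opcycles m)) := by
  induction n with
  | zero => rintro k _ rfl; exact ⟨Iso.refl _⟩
  | succ n ih =>
    intro k m hkm
    obtain ⟨e⟩ := nonempty_satellite_succ_succ_iso hH h0 n _
      (syzygySequence_shortExact F (i := k + 1) (j := k) (by simp) (hF k)) (hproj k)
    obtain ⟨e'⟩ := ih (k + 1) m (by lia)
    exact ⟨e ≪≫ e'⟩

theorem nonempty_leftDerived_iso_of_isLeftSatellite [HasProjectiveResolutions C] (T : C ⥤ D)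
    [T.Additive] [PreservesFiniteColimits T] (e : T ≅ H 0) (n : ℕ) (X : C) :
    Nonempty ((T.leftDerived n).obj X ≅ (H n).obj X) := by
  cases n with
  | zero => exact ⟨T.leftDerivedZeroIsoSelf.app X ≪≫ e.app X⟩
  | succ n =>
    let P := projectiveResolution X
    have h0 : IsZero ((H 0).obj 0) := (T.map_isZero (isZero_zero C)).of_iso (e.symm.app 0)
    obtain ⟨shift⟩ := nonempty_satellite_opcycles_iso hH h0 P.complex P.complex_exactAt_succ
      P.projective n 0 n (zero_add n)
    obtain ⟨satellite⟩ := hH 0 _ (syzygySequence_shortExact P.complex (i := n + 1) (j := n)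
      (by simp) (P.complex_exactAt_succ n)) (P.projective n)
    let augmentation : P.complex.opcycles 0 ≅ X :=
      (P.complex.opcyclesIsCokernel 1 0 (by simp)).coconePointUniqueUpToIso
        P.isColimitCokernelCofork
    exact ⟨P.isoLeftDerivedObj T (n + 1) ≪≫ homologyMapIsoKernel T P.complex (by simp) ≪≫
      kernel.mapIso _ _ (e.app _) (e.app _) (e.hom.naturality _) ≪≫ satellite.symm ≪≫
      shift.symm ≪≫ (H (n + 1)).mapIso augmentation⟩

end Satellites

section DescendingHomology

variable {C : Type u} [Category.{v} C] {D : Type u'} [Category.{v'} D] [Abelian D]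

lemma mono_homologyMap_zero {K L : CochainComplex D ℕ} (f : K ⟶ L) [Mono f] :
    Mono (HomologicalComplex.homologyMap f 0) := by
  have : Mono (K.homologyπ 0 ≫ HomologicalComplex.homologyMap f 0) := by
    rw [HomologicalComplex.homologyπ_naturality]
    infer_instance
  exact (mono_comp_iff_of_isIso (K.homologyπ 0) _).1 this

/-- The cohomology functors of `Φ` read downwards from degree `ℓ`: the functor with index `n` is
`X ↦ H^{ℓ - n}(Φ X)` for `n ≤ ℓ` and zero for `n > ℓ`. The recursion peels off one degree at a time,
so that no truncated subtraction enters the definition. -/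
noncomputable def descendingHomology (Φ : C ⥤ CochainComplex D ℕ) : ℕ → ℕ → C ⥤ D
  | ℓ, 0 => Φ ⋙ HomologicalComplex.homologyFunctor D _ ℓ
  | 0, _ + 1 => (Functor.const C).obj 0
  | ℓ + 1, n + 1 => descendingHomology Φ ℓ n

lemma descendingHomology_of_le (Φ : C ⥤ CochainComplex D ℕ) {ℓ n : ℕ} (h : n ≤ ℓ) :
    descendingHomology Φ ℓ n = Φ ⋙ HomologicalComplex.homologyFunctor D _ (ℓ - n) := by
  induction n generalizing ℓ with
  | zero => simp [descendingHomology]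
  | succ n ih =>
    cases ℓ with
    | zero => lia
    | succ ℓ => rw [descendingHomology, ih (Nat.le_of_succ_le_succ h), Nat.succ_sub_succ]

lemma isZero_descendingHomology_obj (Φ : C ⥤ CochainComplex D ℕ) (X : C) {ℓ n : ℕ} (h : ℓ < n) :
    IsZero ((descendingHomology Φ ℓ n).obj X) := by
  induction n generalizing ℓ with
  | zero => lia
  | succ n ih =>
    cases ℓ with
    | zero => exact isZero_zero D
    | succ ℓ => exact ih (Nat.lt_of_succ_lt_succ h)

variable [Abelian C] {Φ : C ⥤ CochainComplex D ℕ} [Φ.PreservesZeroMorphisms]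
  (hΦ : ∀ S : ShortComplex C, S.ShortExact → (S.map Φ).ShortExact)
include hΦ

lemma isLeftSatellite_homology_zero :
    IsLeftSatellite (Φ ⋙ HomologicalComplex.homologyFunctor D _ 0) ((Functor.const C).obj 0) := by
  intro S hS _
  have : Mono (Φ.map S.f) := (hΦ S hS).mono_f
  have : Mono ((Φ ⋙ HomologicalComplex.homologyFunctor D _ 0).map S.f) :=
    mono_homologyMap_zero (Φ.map S.f)
  exact ⟨(isZero_zero D).iso (isZero_kernel_of_mono _)⟩

lemma isLeftSatellite_homology_succ (j : ℕ)
    (hproj : ∀ (F : C) [Projective F], IsZero ((Φ.obj F).homology j)) :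
    IsLeftSatellite (Φ ⋙ HomologicalComplex.homologyFunctor D _ (j + 1))
      (Φ ⋙ HomologicalComplex.homologyFunctor D _ j) := by
  intro S hS _
  have hrel : (ComplexShape.up ℕ).Rel j (j + 1) := rfl
  have : Mono ((hΦ S hS).δ j (j + 1) hrel) := (hΦ S hS).mono_δ _ _ _ (hproj S.X₂)
  exact ⟨((hΦ S hS).homology_exact₁ j (j + 1) hrel).fIsKernel.conePointUniqueUpToIso
    (limit.isLimit _)⟩

lemma isLeftSatellite_descendingHomology (ℓ : ℕ)
    (hproj : ∀ (F : C) [Projective F] (j : ℕ), j < ℓ → IsZero ((Φ.obj F).homology j)) (n : ℕ) :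
    IsLeftSatellite (descendingHomology Φ ℓ n) (descendingHomology Φ ℓ (n + 1)) := by
  induction ℓ generalizing n with
  | zero =>
    cases n with
    | zero => simpa only [descendingHomology] using isLeftSatellite_homology_zero hΦ
    | succ n =>
      rintro S - -
      simp only [descendingHomology]
      exact ⟨(isZero_zero D).iso ((isZero_zero D).of_mono (kernel.ι (𝟙 0)))⟩
  | succ ℓ ih =>
    cases n with
    | zero =>
      simpa only [descendingHomology] using
        isLeftSatellite_homology_succ hΦ ℓ fun F _ ↦ hproj F ℓ ℓ.lt_succ_self
    | succ n => exact ih (fun F _ j hj ↦ hproj F j (hj.trans ℓ.lt_succ_self)) n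

end DescendingHomology

section TensorComplex

open MonoidalCategory

variable {C : Type u} [Category.{v} C] [MonoidalCategory C] {ι : Type*} {c : ComplexShape ι}

section Preadditive

variable [Preadditive C] [MonoidalPreadditive C]

/-- The functor `N ↦ K ⊗ N`, tensoring a complex `K` termwise with an object on the right. -/
noncomputable def tensorComplex (K : HomologicalComplex C c) : C ⥤ HomologicalComplex C c where
  obj N := ((tensorRight N).mapHomologicalComplex c).obj K
  map f := (NatTrans.mapHomologicalComplex ((tensoringRight C).map f) c).app K
  map_id N := by
    ext i : 1
    exact whiskerLeft_id _ _
  map_comp f g := by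
    ext i : 1
    exact whiskerLeft_comp _ _ _

instance (K : HomologicalComplex C c) : (tensorComplex K).PreservesZeroMorphisms where
  map_zero _ _ := by
    ext i : 1
    exact MonoidalPreadditive.whiskerLeft_zero

end Preadditive

variable [Abelian C] [MonoidalPreadditive C] [∀ X : C, PreservesFiniteColimits (tensorRight X)]

/-- Tensoring commutes with the cokernels `K.opcycles i`, naturally in the tensor factor. -/
noncomputable def tensorComplexOpcyclesIso (K : HomologicalComplex C c) (i : ι) :
    tensorComplex K ⋙ HomologicalComplex.opcyclesFunctor C c i ≅ tensorLeft (K.opcycles i) :=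
  NatIso.ofComponents (fun N ↦ mapOpcyclesIso (tensorRight N) K i)
    (fun f ↦ mapOpcyclesIso_hom_naturality ((tensoringRight C).map f) K i)

/-- Tensoring commutes with the homology of `K` at a degree where the outgoing differential
vanishes, since there the homology is a cokernel. -/
noncomputable def tensorComplexHomologyIso (K : HomologicalComplex C c) {i j : ι}
    (hij : c.next i = j) (hd : K.d i j = 0) :
    tensorComplex K ⋙ HomologicalComplex.homologyFunctor C c i ≅ tensorLeft (K.homology i) :=
  have hd' (N : C) : ((tensorComplex K).obj N).d i j = 0 :=
    (congrArg (tensorRight N).map hd).trans ((tensorRight N).map_zero _ _)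
  let homologyIsoOpcycles : tensorComplex K ⋙ HomologicalComplex.homologyFunctor C c i ≅
      tensorComplex K ⋙ HomologicalComplex.opcyclesFunctor C c i :=
    NatIso.ofComponents (fun N ↦ ((tensorComplex K).obj N).isoHomologyι i j hij (hd' N))
      (fun f ↦ HomologicalComplex.homologyι_naturality ((tensorComplex K).map f) i)
  homologyIsoOpcycles ≪≫ tensorComplexOpcyclesIso K i ≪≫
    (tensoringLeft C).mapIso (K.isoHomologyι i j hij hd).symm

end TensorComplex

section FlatComplex

open MonoidalCategory

variable {R : Type u} [CommRing R]

lemma tensorComplex_map_shortExact {ι : Type*} {c : ComplexShape ι}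
    {K : HomologicalComplex (ModuleCat.{u} R) c} (hK : ∀ i, Module.Flat R (K.X i))
    {S : ShortComplex (ModuleCat.{u} R)} (hS : S.ShortExact) :
    (S.map (tensorComplex K)).ShortExact :=
  HomologicalComplex.shortExact_of_degreewise_shortExact _ fun i ↦
    have := hK i
    hS.map_of_exact (tensorLeft (K.X i))

lemma isZero_homology_tensorComplex_obj {ι : Type*} {c : ComplexShape ι}
    {K : HomologicalComplex (ModuleCat.{u} R) c} {i : ι} (hK : IsZero (K.homology i))
    (F : ModuleCat.{u} R) [Module.Flat R F] : IsZero (((tensorComplex K).obj F).homology i) := by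
  rw [← HomologicalComplex.exactAt_iff_isZero_homology] at hK ⊢
  exact Module.Flat.rTensor_shortComplex_exact F _ hK

theorem nonempty_tor_homology_iso_descendingHomology {K : CochainComplex (ModuleCat.{u} R) ℕ}
    (hflat : ∀ i, Module.Flat R (K.X i)) {ℓ : ℕ} (hd : K.d ℓ (ℓ + 1) = 0)
    (hK : ∀ j < ℓ, IsZero (K.homology j)) (n : ℕ) (N : ModuleCat.{u} R) :
    Nonempty (((Tor (ModuleCat.{u} R) n).obj (K.homology ℓ)).obj N ≅
      (descendingHomology (tensorComplex K) ℓ n).obj N) := by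
  have hproj (F : ModuleCat.{u} R) [Projective F] (j : ℕ) (hj : j < ℓ) :
      IsZero (((tensorComplex K).obj F).homology j) :=
    have : Module.Projective R F := (IsProjective.iff_projective F).2 inferInstance
    isZero_homology_tensorComplex_obj (hK j hj) F
  exact nonempty_leftDerived_iso_of_isLeftSatellite
    (isLeftSatellite_descendingHomology (fun _ ↦ tensorComplex_map_shortExact hflat) ℓ hproj)
    (tensorLeft (K.homology ℓ))
    ((tensorComplexHomologyIso K (by simp) hd).symm ≪≫
      eqToIso (descendingHomology_of_le _ ℓ.zero_le).symm) n N

end FlatComplex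

section Dual

open MonoidalCategory

variable {R : Type u} [CommRing R]

/-- `Hom(P, R) ⊗ N ≅ Hom(P, N)` for a finitely generated projective module `P`. -/
noncomputable def dualTensorIso (P N : ModuleCat.{u} R) [Module.Finite R P]
    [Module.Projective R P] :
    ModuleCat.of R (P ⟶ ModuleCat.of R R) ⊗ N ≅ ModuleCat.of R (P ⟶ N) :=
  (((ModuleCat.homLinearEquiv (S := R)).rTensor N).trans
    ((LinearEquiv.ofBijective _ dualTensorHom_bijective).trans
      (ModuleCat.homLinearEquiv (S := R)).symm)).toModuleIso

/-- `Hom(F, R) ⊗ N ≅ Hom(F, N)` for a complex `F` of finitely generated projective modules. -/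
noncomputable def tensorComplexDualIso (F : ChainComplex (ModuleCat.{u} R) ℕ)
    [∀ n, Module.Finite R (F.X n)] [∀ n, Module.Projective R (F.X n)] (N : ModuleCat.{u} R) :
    (tensorComplex (F.linearYonedaObj R (ModuleCat.of R R))).obj N ≅ F.linearYonedaObj R N :=
  HomologicalComplex.Hom.isoOfComponents (fun i ↦ dualTensorIso (F.X i) N) fun _ _ _ ↦
    ModuleCat.hom_ext (TensorProduct.ext' fun _ _ ↦ rfl)

lemma flat_hom_ring (P : ModuleCat.{u} R) [Module.Finite R P] [Module.Projective R P] :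
    Module.Flat R (P ⟶ ModuleCat.of R R) :=
  Module.Flat.of_linearEquiv (M := Module.Dual R P) (ModuleCat.homLinearEquiv (S := R))

end Dual

end Ischebeck

open Ischebeck in
theorem ischebeck_duality_general.{u} {R : Type u} [CommRing R] {ℓ : ℕ} {M : ModuleCat.{u} R}
    (P : ProjectiveResolution M) (hfg : ∀ n : ℕ, Module.Finite R (P.complex.X n))
    (hlen : IsZero (P.complex.X (ℓ + 1)))
    (hvanish : ∀ i < ℓ, IsZero (((Ext R (ModuleCat R) i).obj (op M)).obj (ModuleCat.of R R)))
    (N : ModuleCat.{u} R) :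
    (∀ n ≤ ℓ, Nonempty
      (((Tor (ModuleCat R) n).obj
          (((Ext R (ModuleCat R) ℓ).obj (op M)).obj (ModuleCat.of R R))).obj N ≅
        ((Ext R (ModuleCat R) (ℓ - n)).obj (op M)).obj N)) ∧
    (∀ n, ℓ < n → IsZero (((Tor (ModuleCat R) n).obj
      (((Ext R (ModuleCat R) ℓ).obj (op M)).obj (ModuleCat.of R R))).obj N)) := by
  have (n : ℕ) : Module.Projective R (P.complex.X n) :=
    (IsProjective.iff_projective _).2 (P.projective n)
  let K := P.complex.linearYonedaObj R (ModuleCat.of R R)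
  have hd : K.d ℓ (ℓ + 1) = 0 := by
    ext f
    exact hlen.eq_of_src _ _
  have hK (j : ℕ) (hj : j < ℓ) : IsZero (K.homology j) :=
    (hvanish j hj).of_iso (P.isoExt j _).symm
  let ω := ((Ext R (ModuleCat R) ℓ).obj (op M)).obj (ModuleCat.of R R)
  have tor (n : ℕ) : Nonempty (((Tor (ModuleCat R) n).obj ω).obj N ≅
      (descendingHomology (tensorComplex K) ℓ n).obj N) :=
    (nonempty_tor_homology_iso_descendingHomology (fun i ↦ flat_hom_ring (P.complex.X i))
      hd hK n N).map ((((Tor (ModuleCat R) n).mapIso (P.isoExt ℓ _)).app N) ≪≫ ·)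
  refine ⟨fun n hn ↦ (tor n).map fun e ↦ e ≪≫ ?_, fun n hn ↦ ?_⟩
  · rw [descendingHomology_of_le _ hn]
    exact (HomologicalComplex.homologyFunctor _ _ (ℓ - n)).mapIso
      (tensorComplexDualIso P.complex N) ≪≫ (P.isoExt (ℓ - n) N).symm
  · obtain ⟨e⟩ := tor n
    exact (isZero_descendingHomology_obj _ N hn).of_iso e

/-- Let `R` be a commutative ring and `M` an `R`-module admitting a projective
resolution of length `ℓ` by finitely generated projective modules, with `Ext^i_R(M, R) = 0` for
`i ≠ ℓ`.  Set `ω = Ext^ℓ_R(M, R)`.  Then for every `R`-module `N`,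
`Tor^R_n(ω, N) ≅ Ext^{ℓ−n}_R(M, N)` for `0 ≤ n ≤ ℓ`, and `Tor^R_n(ω, N) = 0` for `n > ℓ`. -/
theorem ischebeck_duality (R : Type) [CommRing R] (ℓ : ℕ)
    (M : Type) [AddCommGroup M] [Module R M]
    (P : CategoryTheory.ProjectiveResolution (ModuleCat.of R M))
    (hfg : ∀ n : ℕ, Module.Finite R (P.complex.X n))
    (hlen : ∀ n : ℕ, ℓ < n → IsZero (P.complex.X n))
    (hvanish : ∀ i : ℕ, i ≠ ℓ →
      IsZero (((Ext R (ModuleCat R) i).obj (op (ModuleCat.of R M))).obj (ModuleCat.of R R)))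
    (N : Type) [AddCommGroup N] [Module R N] :
    (∀ n : ℕ, n ≤ ℓ →
      Nonempty
        (((Tor (ModuleCat R) n).obj
            (((Ext R (ModuleCat R) ℓ).obj (op (ModuleCat.of R M))).obj
              (ModuleCat.of R R))).obj (ModuleCat.of R N) ≅
          ((Ext R (ModuleCat R) (ℓ - n)).obj (op (ModuleCat.of R M))).obj
            (ModuleCat.of R N))) ∧
    (∀ n : ℕ, ℓ < n →
      IsZero (((Tor (ModuleCat R) n).obj
          (((Ext R (ModuleCat R) ℓ).obj (op (ModuleCat.of R M))).obj
            (ModuleCat.of R R))).obj (ModuleCat.of R N))) := by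
  exact ischebeck_duality_general P hfg (hlen _ ℓ.lt_succ_self) (fun i hi ↦ hvanish i hi.ne)
    (ModuleCat.of R N)
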